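/- arXiv:2204.01810 — 8 statements merged into one kernel-verified Lean document; each statement's English description precedes it below -/
import Mathlib

section
/- Let m ≥ 2 and let G be the spider graph with center vertex v and m legs each of length 5, where leg i is the path v–a_i–b_i–c_i–d_i–e_i (a_i adjacent to v, b_i to a_i, c_i to b_i, d_i to c_i, e_i to d_i). Then for every j ∈ {1,…,m} and every I ⊆ {1,…,m}, the set S(I,j) = ⋃_{i∈I, i≠j}{b_i,c_i} ∪ ⋃_{i∉I, i≠j}{c_i,d_i} is a minimal zero forcing set of G. Consequently, G has at least 2^{m−1} distinct minimal zero forcing sets. -/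
/-!
Write `S = S(I, j)`. It is zero forcing because the blue pair in each leg `i ≠ j` forces that
whole leg (`closure_leg_of_pair`); since `m ≥ 2`, some leg other than `j` then forces the center,
the center has `a_j` as its only white neighbor, and leg `j` is forced outwards.

It is minimal because of forts. A fort is a set `F` such that no vertex outside `F` has exactly one
neighbor in `F`; forcing never enters a fort that is white at the start
(`ZF.IsFort.not_closure`). Removing a vertex of `S` from leg `i` leaves at most one blue vertex `y`
in that leg, and `y` is not an end of the leg; leg `j` has no blue vertex at all. Then leg `j`
together with leg `i` minus `y` is a fort (`isFort_two_legs`): the center sees `a_i` and `a_j`, and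
`y` sees its two neighbors in leg `i`.

For the count, fix `j`: a set `I` avoiding `j` is recovered from `S(I, j)` as the set of `i` with
`b_i ∈ S(I, j)`.
-/

namespace ZF

variable {V : Type*}

/-- The set of vertices eventually colored blue, starting from blue set `S`,
under the zero forcing color change rule: a blue vertex `u` all of whose
neighbors except `w` are blue forces `w` to become blue. -/
inductive Closure (G : SimpleGraph V) (S : Set V) : V → Prop
  | init (v : V) (hv : v ∈ S) : Closure G S v
  | force (u w : V) (hu : Closure G S u) (hadj : G.Adj u w)
      (hother : ∀ x, G.Adj u x → x ≠ w → Closure G S x) : Closure G S w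

/-- `S` is a zero forcing set of `G` if its closure is the whole vertex set. -/
def IsZFS (G : SimpleGraph V) (S : Set V) : Prop := ∀ v, Closure G S v

/-- A minimal zero forcing set: a zero forcing set no proper subset of which
is a zero forcing set. -/
def IsMinimalZFS (G : SimpleGraph V) (S : Set V) : Prop :=
  IsZFS G S ∧ ∀ T : Set V, T ⊂ S → ¬ IsZFS G T

/-- The zero forcing number `Z(G)`: minimum cardinality of a zero forcing set. -/
noncomputable def Z (G : SimpleGraph V) : ℕ :=
  sInf {k | ∃ S : Set V, IsZFS G S ∧ S.ncard = k}

/-- `Z̄(G)`: maximum cardinality of a minimal zero forcing set. -/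
noncomputable def Zbar (G : SimpleGraph V) : ℕ :=
  sSup {k | ∃ S : Set V, IsMinimalZFS G S ∧ S.ncard = k}

end ZF

/-- The spider with `m` legs of length 5: vertex `none` is the center `v`, and
for each `i`, the leg `v – aᵢ – bᵢ – cᵢ – dᵢ – eᵢ` is encoded as
`some (i, 0), some (i, 1), some (i, 2), some (i, 3), some (i, 4)`. -/
def spider (m : ℕ) : SimpleGraph (Option (Fin m × Fin 5)) :=
  SimpleGraph.fromRel (fun u v =>
    (∃ i : Fin m, u = none ∧ v = some (i, 0)) ∨
    (∃ (i : Fin m) (j k : Fin 5), (j : ℕ) + 1 = (k : ℕ) ∧ u = some (i, j) ∧ v = some (i, k)))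

/-! ### Forts -/

namespace ZF

variable {V : Type*}

/-- A fort of `G`: a vertex outside `F` with a neighbor in `F` has a second neighbor in `F`.
Nonemptiness of `F` is not part of this definition. -/
def IsFort_s2 (G : SimpleGraph V) (F : Set V) : Prop :=
  ∀ u w, u ∉ F → w ∈ F → G.Adj u w → ∃ x, G.Adj u x ∧ x ≠ w ∧ x ∈ F

theorem IsFort_s2.not_closure {G : SimpleGraph V} {F T : Set V} (hF : IsFort_s2 G F)
    (hT : ∀ v ∈ T, v ∉ F) {v : V} (hv : Closure G T v) : v ∉ F := by
  induction hv with
  | init v hv => exact hT v hv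
  | force u w hu hadj hother ihu ih =>
    intro hw
    obtain ⟨x, hx, hxw, hxF⟩ := hF u w ihu hw hadj
    exact ih x hx hxw hxF

end ZF

/-! ### Adjacency in the spider -/

theorem spider_adj_none {m : ℕ} {x : Option (Fin m × Fin 5)} :
    (spider m).Adj none x ↔ ∃ i, x = some (i, 0) := by
  simp only [spider, SimpleGraph.fromRel_adj]
  aesop

theorem spider_adj_some_none {m : ℕ} {i : Fin m} {k : Fin 5} :
    (spider m).Adj (some (i, k)) none ↔ k = 0 := by
  rw [SimpleGraph.adj_comm, spider_adj_none]
  aesop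

theorem spider_adj_some {m : ℕ} {i i' : Fin m} {k k' : Fin 5} :
    (spider m).Adj (some (i, k)) (some (i', k')) ↔
      i = i' ∧ ((k : ℕ) + 1 = k' ∨ (k' : ℕ) + 1 = k) := by
  simp only [spider, SimpleGraph.fromRel_adj]
  constructor
  · rintro ⟨-, (⟨_, h, -⟩ | ⟨_, _, _, h, h1, h2⟩) | (⟨_, h, -⟩ | ⟨_, _, _, h, h1, h2⟩)⟩ <;>
      simp_all
  · rintro ⟨rfl, h⟩
    refine ⟨?_, ?_⟩
    · intro h'
      simp only [Option.some.injEq, Prod.mk.injEq, true_and] at h'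
      subst h'
      omega
    · rcases h with h | h
      · exact Or.inl (Or.inr ⟨i, k, k', h, rfl, rfl⟩)
      · exact Or.inr (Or.inr ⟨i, k', k, h, rfl, rfl⟩)

/-! ### Forcing along the legs -/

/-- Inside a leg, a blue vertex other than `a_i` whose inner neighbor is blue forces outwards. -/
theorem closure_succ {m : ℕ} {S : Set (Option (Fin m × Fin 5))} {i : Fin m} {p k n : Fin 5}
    (hp : (p : ℕ) + 1 = k) (hn : (k : ℕ) + 1 = n)
    (h1 : ZF.Closure (spider m) S (some (i, p))) (h2 : ZF.Closure (spider m) S (some (i, k))) :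
    ZF.Closure (spider m) S (some (i, n)) := by
  refine .force (some (i, k)) _ h2 (spider_adj_some.2 ⟨rfl, Or.inl hn⟩) ?_
  rintro (_ | ⟨i', k'⟩) hx hne
  · rw [spider_adj_some_none] at hx
    subst hx
    simp at hp
  · obtain ⟨rfl, h | h⟩ := spider_adj_some.1 hx
    · exact absurd (by rw [Fin.ext (h.symm.trans hn)]) hne
    · rwa [show k' = p from Fin.ext (by omega)]

/-- Inside a leg, a blue vertex other than `a_i` whose outer neighbor is blue forces inwards. -/
theorem closure_pred {m : ℕ} {S : Set (Option (Fin m × Fin 5))} {i : Fin m} {p k n : Fin 5}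
    (hp : (p : ℕ) + 1 = k) (hn : (k : ℕ) + 1 = n)
    (h1 : ZF.Closure (spider m) S (some (i, n))) (h2 : ZF.Closure (spider m) S (some (i, k))) :
    ZF.Closure (spider m) S (some (i, p)) := by
  refine .force (some (i, k)) _ h2 (spider_adj_some.2 ⟨rfl, Or.inr hp⟩) ?_
  rintro (_ | ⟨i', k'⟩) hx hne
  · rw [spider_adj_some_none] at hx
    subst hx
    simp at hp
  · obtain ⟨rfl, h | h⟩ := spider_adj_some.1 hx
    · rwa [show k' = n from Fin.ext (by omega)]
    · exact absurd (by rw [show k' = p from Fin.ext (by omega)]) hne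

theorem closure_leg_of_pair {m : ℕ} {S : Set (Option (Fin m × Fin 5))} {i : Fin m}
    (h : (some (i, 1) ∈ S ∧ some (i, 2) ∈ S) ∨ (some (i, 2) ∈ S ∧ some (i, 3) ∈ S))
    (k : Fin 5) : ZF.Closure (spider m) S (some (i, k)) := by
  have h123 : ZF.Closure (spider m) S (some (i, 1)) ∧ ZF.Closure (spider m) S (some (i, 2)) ∧
      ZF.Closure (spider m) S (some (i, 3)) := by
    rcases h with ⟨h1, h2⟩ | ⟨h2, h3⟩
    · exact ⟨.init _ h1, .init _ h2, closure_succ (p := 1) (k := 2) rfl rfl (.init _ h1) (.init _ h2)⟩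
    · exact ⟨closure_pred (k := 2) (n := 3) rfl rfl (.init _ h3) (.init _ h2), .init _ h2, .init _ h3⟩
  obtain ⟨h1, h2, h3⟩ := h123
  have h0 : ZF.Closure (spider m) S (some (i, 0)) :=
    closure_pred (k := 1) (n := 2) rfl rfl h2 h1
  have h4 : ZF.Closure (spider m) S (some (i, 4)) :=
    closure_succ (p := 2) (k := 3) rfl rfl h2 h3
  fin_cases k <;> assumption

/-- Once every leg except leg `j` is blue, the center and then leg `j` are forced. The hypothesis
`i ≠ j` provides the leg that forces the center. -/
theorem isZFS_of_other_legs {m : ℕ} {S : Set (Option (Fin m × Fin 5))} {i j : Fin m} (hij : i ≠ j)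
    (h : ∀ i ≠ j, ∀ k, ZF.Closure (spider m) S (some (i, k))) : ZF.IsZFS (spider m) S := by
  have hv : ZF.Closure (spider m) S none := by
    refine .force (some (i, 0)) _ (h i hij 0) (spider_adj_some_none.2 rfl) ?_
    rintro (_ | ⟨i', k'⟩) hx hne
    · exact absurd rfl hne
    · obtain ⟨rfl, -⟩ := spider_adj_some.1 hx
      exact h _ hij _
  have h0 : ZF.Closure (spider m) S (some (j, 0)) := by
    refine .force none _ hv (spider_adj_none.2 ⟨j, rfl⟩) ?_
    intro x hx hne
    obtain ⟨i', rfl⟩ := spider_adj_none.1 hx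
    exact h _ (fun e => hne (by rw [e])) _
  have h1 : ZF.Closure (spider m) S (some (j, 1)) := by
    refine .force (some (j, 0)) _ h0 (spider_adj_some.2 ⟨rfl, Or.inl rfl⟩) ?_
    rintro (_ | ⟨i', k'⟩) hx hne
    · exact hv
    · obtain ⟨rfl, h | h⟩ := spider_adj_some.1 hx
      · exact absurd (by rw [show k' = 1 from Fin.ext h.symm]) hne
      · simp at h
  have h2 := closure_succ (p := 0) (k := 1) (n := 2) rfl rfl h0 h1
  have h3 := closure_succ (p := 1) (k := 2) (n := 3) rfl rfl h1 h2
  have h4 := closure_succ (p := 2) (k := 3) (n := 4) rfl rfl h2 h3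
  rintro (_ | ⟨i', k⟩)
  · exact hv
  · by_cases hi : i' = j
    · subst hi
      fin_cases k <;> assumption
    · exact h _ hi _

/-! ### Forts made of two legs -/

/-- Two legs `i ≠ j` form a fort, even after deleting from leg `i` one vertex that is not an end of
the leg. -/
theorem isFort_two_legs {m : ℕ} {i j : Fin m} (hij : i ≠ j) {y : Fin 5} (hy0 : y ≠ 0)
    (hy4 : y ≠ 4) :
    ZF.IsFort_s2 (spider m) {v | ∃ k, v = some (j, k) ∨ (v = some (i, k) ∧ k ≠ y)} := by
  rintro (_ | ⟨i', k'⟩) w hu hw hadj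
  · obtain ⟨l, rfl⟩ := spider_adj_none.1 hadj
    by_cases hl : l = j
    · exact ⟨some (i, 0), spider_adj_none.2 ⟨_, rfl⟩, by simp [hl, hij],
        0, Or.inr ⟨rfl, hy0.symm⟩⟩
    · exact ⟨some (j, 0), spider_adj_none.2 ⟨_, rfl⟩, by simp [Ne.symm hl], 0, Or.inl rfl⟩
  · obtain ⟨k, hw⟩ := hw
    -- The only vertex outside the fort but in one of the two legs is `y` of leg `i`.
    have hi' : i' = i ∧ k' = y := by
      have hj : i' ≠ j := fun e => hu ⟨k', Or.inl (by rw [e])⟩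
      have hi : i' = i := by
        rcases hw with rfl | ⟨rfl, -⟩
        · exact absurd (spider_adj_some.1 hadj).1 hj
        · exact (spider_adj_some.1 hadj).1
      refine ⟨hi, ?_⟩
      by_contra hk
      exact hu ⟨k', Or.inr ⟨by rw [hi], hk⟩⟩
    obtain ⟨rfl, rfl⟩ := hi'
    have hlo : 1 ≤ (k' : ℕ) := Nat.one_le_iff_ne_zero.2 fun e => hy0 (Fin.ext e)
    have hhi : (k' : ℕ) < 4 := by
      have : (k' : ℕ) ≠ 4 := fun e => hy4 (Fin.ext e)
      omega
    have hwk : w = some (i', k) ∧ ((k' : ℕ) + 1 = k ∨ (k : ℕ) + 1 = k') := by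
      rcases hw with rfl | ⟨rfl, -⟩
      · exact absurd (spider_adj_some.1 hadj).1 hij
      · exact ⟨rfl, (spider_adj_some.1 hadj).2⟩
    obtain ⟨rfl, h | h⟩ := hwk
    · refine ⟨some (i', ⟨k' - 1, by omega⟩), spider_adj_some.2 ⟨rfl, Or.inr ?_⟩, ?_, _,
        Or.inr ⟨rfl, ?_⟩⟩
      · show (k' : ℕ) - 1 + 1 = k'
        omega
      · simp only [ne_eq, Option.some.injEq, Prod.mk.injEq, true_and, Fin.ext_iff]
        omega
      · simp only [ne_eq, Fin.ext_iff]
        omega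
    · refine ⟨some (i', ⟨k' + 1, by omega⟩), spider_adj_some.2 ⟨rfl, Or.inl rfl⟩, ?_, _,
        Or.inr ⟨rfl, ?_⟩⟩
      · simp only [ne_eq, Option.some.injEq, Prod.mk.injEq, true_and, Fin.ext_iff]
        omega
      · simp only [ne_eq, Fin.ext_iff]
        omega

/-- If `T` misses leg `j` and meets another leg `i` in at most one vertex, which is not an end of
that leg, then `T` is not zero forcing. -/
theorem not_isZFS_of_leg {m : ℕ} {T : Set (Option (Fin m × Fin 5))} {i j : Fin m} (hij : i ≠ j)
    {y : Fin 5} (hy0 : y ≠ 0) (hy4 : y ≠ 4) (hj : ∀ k, some (j, k) ∉ T)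
    (hi : ∀ k, some (i, k) ∈ T → k = y) : ¬ ZF.IsZFS (spider m) T := by
  intro hT
  refine (isFort_two_legs hij hy0 hy4).not_closure (T := T) ?_ (hT (some (j, 0)))
    ⟨0, Or.inl rfl⟩
  rintro v hv ⟨k, rfl | ⟨rfl, hk⟩⟩
  · exact hj k hv
  · exact hk (hi k hv)

/-! ### The sets `S(I, j)` -/

/-- The set `S(I, j)`: the pair `b_i, c_i` for `i ∈ I` and the pair `c_i, d_i` for `i ∉ I`, over all
legs `i ≠ j`. -/
def legPairs (m : ℕ) (j : Fin m) (I : Set (Fin m)) : Set (Option (Fin m × Fin 5)) :=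
  {v | ∃ i : Fin m, i ≠ j ∧
    ((i ∈ I ∧ (v = some (i, (1 : Fin 5)) ∨ v = some (i, (2 : Fin 5)))) ∨
     (i ∉ I ∧ (v = some (i, (2 : Fin 5)) ∨ v = some (i, (3 : Fin 5)))))}

theorem some_mem_legPairs {m : ℕ} {j : Fin m} {I : Set (Fin m)} {i : Fin m} {k : Fin 5} :
    some (i, k) ∈ legPairs m j I ↔
      i ≠ j ∧ ((i ∈ I ∧ (k = 1 ∨ k = 2)) ∨ (i ∉ I ∧ (k = 2 ∨ k = 3))) := by
  constructor
  · rintro ⟨i', h⟩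
    aesop
  · rintro h
    refine ⟨i, ?_⟩
    simpa using h

theorem legPairs_isMinimalZFS {m : ℕ} (hm : 2 ≤ m) (j : Fin m) (I : Set (Fin m)) :
    ZF.IsMinimalZFS (spider m) (legPairs m j I) := by
  constructor
  · have : Nontrivial (Fin m) := Fin.nontrivial_iff_two_le.2 hm
    obtain ⟨i, hij⟩ := exists_ne j
    refine isZFS_of_other_legs hij fun l hl => closure_leg_of_pair ?_
    by_cases hI : l ∈ I
    · exact Or.inl ⟨some_mem_legPairs.2 (by simp [hl, hI]), some_mem_legPairs.2 (by simp [hl, hI])⟩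
    · exact Or.inr ⟨some_mem_legPairs.2 (by simp [hl, hI]), some_mem_legPairs.2 (by simp [hl, hI])⟩
  · intro T hT
    obtain ⟨x, ⟨i, hij, hx⟩, hxT⟩ := Set.exists_of_ssubset hT
    have hj : ∀ k, some (j, k) ∉ T := fun k hk => (some_mem_legPairs.1 (hT.1 hk)).1 rfl
    have hi : ∀ k, some (i, k) ∈ T →
        some (i, k) ≠ x ∧ ((i ∈ I ∧ (k = 1 ∨ k = 2)) ∨ (i ∉ I ∧ (k = 2 ∨ k = 3))) :=
      fun k hk => ⟨fun e => hxT (e ▸ hk), (some_mem_legPairs.1 (hT.1 hk)).2⟩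
    -- The witness `y` is the other vertex of the pair that contains the missing vertex `x`.
    rcases hx with ⟨hI, rfl | rfl⟩ | ⟨hI, rfl | rfl⟩
    · exact not_isZFS_of_leg hij (y := 2) (by decide) (by decide) hj
        fun k hk => by have := hi k hk; simp_all
    · exact not_isZFS_of_leg hij (y := 1) (by decide) (by decide) hj
        fun k hk => by have := hi k hk; simp_all
    · exact not_isZFS_of_leg hij (y := 3) (by decide) (by decide) hj
        fun k hk => by have := hi k hk; simp_all
    · exact not_isZFS_of_leg hij (y := 2) (by decide) (by decide) hj
        fun k hk => by have := hi k hk; simp_all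

theorem legPairs_injOn {m : ℕ} (j : Fin m) :
    Set.InjOn (fun I : Finset (Fin m) => legPairs m j (I : Set (Fin m)))
      ((Finset.univ.erase j).powerset : Finset (Finset (Fin m))) := by
  intro I hI J hJ hIJ
  have hIj : j ∉ I := fun h => by simpa using Finset.mem_powerset.1 hI h
  have hJj : j ∉ J := fun h => by simpa using Finset.mem_powerset.1 hJ h
  ext i
  by_cases hij : i = j
  · simp [hij, hIj, hJj]
  · have h : some (i, (1 : Fin 5)) ∈ legPairs m j (I : Set (Fin m)) ↔
        some (i, (1 : Fin 5)) ∈ legPairs m j (J : Set (Fin m)) := by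
      rw [show legPairs m j (I : Set (Fin m)) = legPairs m j (J : Set (Fin m)) from hIJ]
    simpa [some_mem_legPairs, hij] using h

/-- For the spider with `m ≥ 2` legs of length 5, for every `j` and every
`I ⊆ {1, …, m}`, the set `S(I, j) = ⋃_{i ∈ I, i ≠ j} {bᵢ, cᵢ} ∪ ⋃_{i ∉ I, i ≠ j} {cᵢ, dᵢ}`
is a minimal zero forcing set; consequently there are at least `2 ^ (m - 1)`
distinct minimal zero forcing sets. -/
theorem stmt2 (m : ℕ) (hm : 2 ≤ m) :
    (∀ (j : Fin m) (I : Set (Fin m)),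
      ZF.IsMinimalZFS (spider m)
        {v | ∃ i : Fin m, i ≠ j ∧
          ((i ∈ I ∧ (v = some (i, (1 : Fin 5)) ∨ v = some (i, (2 : Fin 5)))) ∨
           (i ∉ I ∧ (v = some (i, (2 : Fin 5)) ∨ v = some (i, (3 : Fin 5)))))}) ∧
    2 ^ (m - 1) ≤ {S : Set (Option (Fin m × Fin 5)) | ZF.IsMinimalZFS (spider m) S}.ncard := by
  refine ⟨fun j I => legPairs_isMinimalZFS hm j I, ?_⟩
  let j : Fin m := ⟨0, by omega⟩
  calc 2 ^ (m - 1)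
      = ((Finset.univ.erase j).powerset : Set (Finset (Fin m))).ncard := by
        rw [Set.ncard_coe_finset, Finset.card_powerset,
          Finset.card_erase_of_mem (Finset.mem_univ j), Finset.card_univ, Fintype.card_fin]
    _ = ((fun I : Finset (Fin m) => legPairs m j (I : Set (Fin m))) ''
          ((Finset.univ.erase j).powerset : Finset (Finset (Fin m)))).ncard :=
        (legPairs_injOn j).ncard_image.symm
    _ ≤ _ := Set.ncard_le_ncard (by
        rintro _ ⟨I, -, rfl⟩
        exact legPairs_isMinimalZFS hm j I) (Set.toFinite _)
end

section
/- If a finite simple graph G has k connected components that each contain at least two vertices (its nontrivial components), then G has at least 2^k distinct minimum zero forcing sets (zero forcing sets of cardinality Z(G)), and hence at least 2^k distinct minimal zero forcing sets. -/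
namespace ZF

variable {V : Type*} {G : SimpleGraph V}

lemma Closure.trans {S T : Set V} (h : ∀ v ∈ S, Closure G T v) {v : V} (hv : Closure G S v) :
    Closure G T v := by
  induction hv with
  | init v hv => exact h v hv
  | force u w _ hadj _ ihu ih => exact .force u w ihu hadj ih

/-- A proper subset `B` of the vertices that contains a zero forcing set admits a force. -/
lemma exists_force {S B : Set V} (hS : IsZFS G S) (hSB : S ⊆ B) (hB : B ≠ Set.univ) :
    ∃ u w, u ∈ B ∧ w ∉ B ∧ G.Adj u w ∧ ∀ x, G.Adj u x → x ≠ w → x ∈ B := by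
  by_contra hcon
  refine hB (Set.eq_univ_of_forall fun v => ?_)
  induction hS v with
  | init v hv => exact hSB hv
  | force u w _ hadj _ ihu ih =>
    by_contra hw
    exact hcon ⟨u, w, ihu, hw, hadj, ih⟩

/-- The state of a forcing process that started from `S`: `B` is the current blue set and `T` the
set of blue vertices that have not yet performed a force, which are the current ends of the forcing
chains. The field `zfs` says that the forces performed so far can be undone in reverse order once
the vertices outside `B` are blue. The field `moved` says that in each component either nothing has
been forced yet or some vertex of `S` has performed a force. -/
structure IsState (G : SimpleGraph V) (S B T : Set V) : Prop where
  start_subset : S ⊆ B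
  ends_subset : T ⊆ B
  nbr_mem : ∀ x ∈ B, x ∉ T → ∀ y, G.Adj x y → y ∈ B
  zfs : IsZFS G (T ∪ Bᶜ)
  card : ∀ C : G.ConnectedComponent, (T ∩ C.supp).ncard = (S ∩ C.supp).ncard
  moved : ∀ C : G.ConnectedComponent, B ∩ C.supp ⊆ S ∨ ∃ v ∈ S, v ∈ C.supp ∧ v ∉ T

lemma IsState.initial (S : Set V) : IsState G S S S where
  start_subset := subset_rfl
  ends_subset := subset_rfl
  nbr_mem _ h h' := absurd h h'
  zfs v := .init v (by simp)
  card _ := rfl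
  moved _ := .inl Set.inter_subset_left

/-- Performing the force `u → w` moves the end of the chain of `u` from `u` to `w`. -/
lemma IsState.step [Finite V] {S B T : Set V} (h : IsState G S B T) {u w : V} (hu : u ∈ B)
    (hw : w ∉ B) (hadj : G.Adj u w) (hother : ∀ x, G.Adj u x → x ≠ w → x ∈ B) :
    IsState G S (insert w B) (insert w (T \ {u})) := by
  -- `u` has the neighbor `w` outside `B`, so it has not performed a force before.
  have huT : u ∈ T := by
    by_contra huT
    exact hw (h.nbr_mem u hu huT w hadj)
  have hwT : w ∉ T := fun hwT => hw (h.ends_subset hwT)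
  have hcomp : ∀ C : G.ConnectedComponent, u ∈ C.supp ↔ w ∈ C.supp := fun C => by
    rw [SimpleGraph.ConnectedComponent.mem_supp_iff, SimpleGraph.ConnectedComponent.mem_supp_iff,
      SimpleGraph.ConnectedComponent.sound hadj.reachable]
  refine ⟨h.start_subset.trans (Set.subset_insert _ _), ?_, ?_, ?_, ?_, ?_⟩
  · exact Set.insert_subset_insert (Set.sdiff_subset.trans h.ends_subset)
  · intro x hx hxT y hxy
    by_cases hyw : y = w
    · exact .inl hyw
    right
    have hxw : x ≠ w := fun e => hxT (.inl e)
    by_cases hxu : x = u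
    · exact hother y (hxu ▸ hxy) hyw
    · exact h.nbr_mem x (hx.resolve_left hxw) (fun hh => hxT (.inr ⟨hh, hxu⟩)) y hxy
  · have hinit : ∀ x, x ≠ u → x ∈ T ∪ Bᶜ →
        Closure G (insert w (T \ {u}) ∪ (insert w B)ᶜ) x := by
      intro x hxu hx
      apply Closure.init
      by_cases hxw : x = w
      · exact .inl (.inl hxw)
      rcases hx with hx | hx
      · exact .inl (.inr ⟨hx, hxu⟩)
      · exact .inr fun hh => hh.elim hxw hx
    -- A neighbor of `w` in `B` still has the white neighbor `w`, so it lies in `T`. Hence all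
    -- neighbors of `w` other than `u` are initially blue, and `w` forces `u` back.
    have hclu : Closure G (insert w (T \ {u}) ∪ (insert w B)ᶜ) u := by
      refine .force w u (.init w (.inl (.inl rfl))) hadj.symm fun x hx hxu => hinit x hxu ?_
      by_contra hxn
      simp only [Set.mem_union, Set.mem_compl_iff, not_or, not_not] at hxn
      exact hw (h.nbr_mem x hxn.2 hxn.1 w hx.symm)
    intro v
    refine Closure.trans (fun x hx => ?_) (h.zfs v)
    by_cases hxu : x = u
    · exact hxu ▸ hclu
    · exact hinit x hxu hx
  · intro C
    rw [← h.card C]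
    by_cases hC : u ∈ C.supp
    · have hwC := (hcomp C).1 hC
      have : insert w (T \ {u}) ∩ C.supp = insert w ((T ∩ C.supp) \ {u}) := by
        ext x
        simp only [Set.mem_inter_iff, Set.mem_insert_iff, Set.mem_sdiff, Set.mem_singleton_iff]
        constructor
        · tauto
        · rintro (rfl | hx)
          · exact ⟨.inl rfl, hwC⟩
          · tauto
      rw [this]
      exact Set.ncard_exchange (fun hh => hwT hh.1) ⟨huT, hC⟩
    · have hwC : w ∉ C.supp := fun hh => hC ((hcomp C).2 hh)
      congr 1
      ext x
      simp only [Set.mem_inter_iff, Set.mem_insert_iff, Set.mem_sdiff, Set.mem_singleton_iff]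
      constructor
      · rintro ⟨rfl | hx, hxC⟩
        · exact absurd hxC hwC
        · exact ⟨hx.1, hxC⟩
      · rintro ⟨hx, hxC⟩
        exact ⟨.inr ⟨hx, fun e => hC (e ▸ hxC)⟩, hxC⟩
  · intro C
    rcases h.moved C with hC | ⟨v, hvS, hvC, hvT⟩
    · by_cases huC : u ∈ C.supp
      · exact .inr ⟨u, hC ⟨hu, huC⟩, huC, fun hh =>
          hh.elim (fun e => hw (e ▸ hu)) fun e => e.2 rfl⟩
      · left
        rintro x ⟨rfl | hx, hxC⟩
        · exact absurd ((hcomp C).2 hxC) huC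
        · exact hC ⟨hx, hxC⟩
    · refine .inr ⟨v, hvS, hvC, fun hh => hh.elim (fun e => hw ?_) fun e => hvT e.1⟩
      exact e ▸ h.start_subset hvS

/-- The reversal of a zero forcing set: the ends of its forcing chains form a zero forcing set. Its
vertices are distributed over the components as those of `S`, and it misses a vertex of `S` in every
component not contained in `S`, namely the first one there to perform a force. -/
lemma exists_reversal [Finite V] {S : Set V} (hS : IsZFS G S) :
    ∃ T, IsZFS G T ∧
      (∀ C : G.ConnectedComponent, (T ∩ C.supp).ncard = (S ∩ C.supp).ncard) ∧
      ∀ C : G.ConnectedComponent, C.supp ⊆ S ∨ ∃ v ∈ S, v ∈ C.supp ∧ v ∉ T := by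
  obtain ⟨B, ⟨T, hT⟩, hmax⟩ := (Set.toFinite {B : Set V | ∃ T, IsState G S B T}).exists_maximal
    ⟨S, S, .initial S⟩
  have hB : B = Set.univ := by
    by_contra hB
    obtain ⟨u, w, hu, hw, hadj, hother⟩ := exists_force hS hT.start_subset hB
    exact hw (hmax ⟨_, hT.step hu hw hadj hother⟩ (Set.subset_insert w B) (Set.mem_insert w B))
  subst hB
  exact ⟨T, by simpa using hT.zfs, hT.card, by simpa using hT.moved⟩

/-- The set that agrees with `T` on the components in `A` and with `S` on all others. -/
def mix (S T : Set V) (A : Set G.ConnectedComponent) : Set V :=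
  {v | (G.connectedComponentMk v ∈ A ∧ v ∈ T) ∨ (G.connectedComponentMk v ∉ A ∧ v ∈ S)}

/-- Forcing within a component depends only on the blue vertices of that component. -/
lemma Closure.of_agree {S M : Set V} {C : G.ConnectedComponent} (h : S ∩ C.supp ⊆ M) {v : V}
    (hv : Closure G S v) (hC : v ∈ C.supp) : Closure G M v := by
  have hadj_mem : ∀ {x y}, G.Adj x y → x ∈ C.supp → y ∈ C.supp := fun {x y} hxy hx => by
    rw [SimpleGraph.ConnectedComponent.mem_supp_iff] at hx ⊢
    rw [← hx, SimpleGraph.ConnectedComponent.sound hxy.reachable]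
  induction hv with
  | init v hv => exact .init v (h ⟨hv, hC⟩)
  | force u w _ hadj _ ihu ih =>
    have huC := hadj_mem hadj.symm hC
    exact .force u w (ihu huC) hadj fun x hx hxw => ih x hx hxw (hadj_mem hx huC)

lemma mix_inter_of_mem {S T : Set V} {A : Set G.ConnectedComponent} {C : G.ConnectedComponent}
    (hC : C ∈ A) : mix S T A ∩ C.supp = T ∩ C.supp := by
  ext v
  simp only [mix, Set.mem_inter_iff, Set.mem_ofPred_eq, SimpleGraph.ConnectedComponent.mem_supp_iff]
  constructor <;> rintro ⟨h, rfl⟩ <;> simp_all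

lemma mix_inter_of_notMem {S T : Set V} {A : Set G.ConnectedComponent} {C : G.ConnectedComponent}
    (hC : C ∉ A) : mix S T A ∩ C.supp = S ∩ C.supp := by
  ext v
  simp only [mix, Set.mem_inter_iff, Set.mem_ofPred_eq, SimpleGraph.ConnectedComponent.mem_supp_iff]
  constructor <;> rintro ⟨h, rfl⟩ <;> simp_all

lemma isZFS_mix {S T : Set V} (hS : IsZFS G S) (hT : IsZFS G T) (A : Set G.ConnectedComponent) :
    IsZFS G (mix S T A) := by
  intro v
  by_cases hA : G.connectedComponentMk v ∈ A
  · exact (hT v).of_agree ((mix_inter_of_mem (S := S) hA).symm.subset.trans Set.inter_subset_left)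
      rfl
  · exact (hS v).of_agree
      ((mix_inter_of_notMem (T := T) hA).symm.subset.trans Set.inter_subset_left) rfl

/-- Cardinality can be compared component by component. -/
lemma ncard_eq_of_forall_supp [Finite V] {S T : Set V}
    (h : ∀ C : G.ConnectedComponent, (T ∩ C.supp).ncard = (S ∩ C.supp).ncard) :
    T.ncard = S.ncard := by
  classical
  have := Fintype.ofFinite V
  have key : ∀ X : Set V, X.ncard = ∑ C : G.ConnectedComponent, (X ∩ C.supp).ncard := by
    intro X
    rw [Set.ncard_eq_toFinset_card' X, Finset.card_eq_sum_card_fiberwise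
      (f := G.connectedComponentMk) (t := Finset.univ) (fun _ _ => by simp)]
    refine Finset.sum_congr rfl fun C _ => ?_
    rw [← Set.ncard_coe_finset]
    congr 1
    ext v
    simp
  rw [key, key]
  exact Finset.sum_congr rfl fun C _ => h C

lemma Z_le {S : Set V} (hS : IsZFS G S) : Z G ≤ S.ncard := Nat.sInf_le ⟨S, hS, rfl⟩

lemma exists_minimum (G : SimpleGraph V) : ∃ S, IsZFS G S ∧ S.ncard = Z G :=
  Nat.sInf_mem (s := {k | ∃ S : Set V, IsZFS G S ∧ S.ncard = k})
    ⟨_, Set.univ, fun v => .init v trivial, rfl⟩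

lemma isMinimalZFS_of_minimum [Finite V] {S : Set V} (hS : IsZFS G S) (hc : S.ncard = Z G) :
    IsMinimalZFS G S :=
  ⟨hS, fun T hTS hT => absurd (Z_le hT) (by
    rw [← hc]
    exact not_le.2 (Set.ncard_lt_ncard hTS))⟩

/-- A minimal zero forcing set contains no nontrivial component: one of two adjacent vertices of
such a component could be removed, as the other one would force it. -/
lemma not_supp_subset {S : Set V} (hS : IsMinimalZFS G S) {C : G.ConnectedComponent}
    (hC : 2 ≤ C.supp.ncard) : ¬ C.supp ⊆ S := by
  intro hCS
  obtain ⟨x, y, hx, hy, hxy⟩ : ∃ x y, x ∈ C.supp ∧ y ∈ C.supp ∧ x ≠ y := by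
    obtain ⟨x, hx, y, hy, hxy⟩ := (Set.one_lt_ncard_iff_nontrivial_and_finite.1 hC).1
    exact ⟨x, y, hx, hy, hxy⟩
  have hmem : ∀ {z}, G.Adj x z → z ∈ C.supp := fun {z} hz => by
    rw [SimpleGraph.ConnectedComponent.mem_supp_iff] at hx ⊢
    rw [← hx, SimpleGraph.ConnectedComponent.sound hz.reachable]
  obtain ⟨p⟩ : G.Reachable x y := SimpleGraph.ConnectedComponent.exact (hx.trans hy.symm)
  cases p with
  | nil => exact hxy rfl
  | @cons _ z _ hadj _ =>
    refine hS.2 (S \ {z}) ⟨Set.sdiff_subset, fun h => (h (hCS (hmem hadj))).2 rfl⟩ fun v => ?_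
    refine Closure.trans (fun a ha => ?_) (hS.1 v)
    by_cases haz : a = z
    · subst haz
      exact .force x a (.init x ⟨hCS hx, hadj.ne⟩) hadj fun b hb hba =>
        .init b ⟨hCS (hmem hb), hba⟩
    · exact .init a ⟨ha, haz⟩

end ZF

/-- If `G` has `k` nontrivial connected components (components with at least
two vertices), then `G` has at least `2 ^ k` minimum zero forcing sets and at
least `2 ^ k` minimal zero forcing sets. -/
theorem stmt5 {V : Type*} [Fintype V] (G : SimpleGraph V) (k : ℕ)
    (h : {C : G.ConnectedComponent | 2 ≤ C.supp.ncard}.ncard = k) :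
    2 ^ k ≤ {S : Set V | ZF.IsZFS G S ∧ S.ncard = ZF.Z G}.ncard ∧
    2 ^ k ≤ {S : Set V | ZF.IsMinimalZFS G S}.ncard := by
  have hmin : 2 ^ k ≤ {S : Set V | ZF.IsZFS G S ∧ S.ncard = ZF.Z G}.ncard := by
    obtain ⟨S, hS, hSc⟩ := ZF.exists_minimum G
    obtain ⟨T, hT, hcard, hmoved⟩ := ZF.exists_reversal hS
    rw [← h, ← Set.ncard_powerset _ (Set.toFinite _)]
    refine Set.ncard_le_ncard_of_injOn (ZF.mix S T) (fun A _ => ?_) ?_ (Set.toFinite _)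
    · refine ⟨ZF.isZFS_mix hS hT A, (ZF.ncard_eq_of_forall_supp (G := G) fun C => ?_).trans hSc⟩
      by_cases hC : C ∈ A
      · rw [ZF.mix_inter_of_mem hC, hcard C]
      · rw [ZF.mix_inter_of_notMem hC]
    · intro A hA A' hA' hAA'
      -- A nontrivial `C` contains a vertex `v` of `S \ T`, and `v ∈ mix S T A` exactly if `C ∉ A`.
      have key : ∀ C : G.ConnectedComponent, 2 ≤ C.supp.ncard → (C ∈ A ↔ C ∈ A') := by
        intro C hC
        obtain ⟨v, hvS, rfl, hvT⟩ := (hmoved C).resolve_left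
          (ZF.not_supp_subset (ZF.isMinimalZFS_of_minimum hS hSc) hC)
        have hv : v ∈ ZF.mix S T A ↔ v ∈ ZF.mix S T A' := by rw [hAA']
        simp only [ZF.mix, Set.mem_ofPred_eq] at hv
        tauto
      ext C
      exact ⟨fun hC => (key C (hA hC)).1 hC, fun hC => (key C (hA' hC)).2 hC⟩
  exact ⟨hmin, hmin.trans (Set.ncard_le_ncard
    (fun S hS => ZF.isMinimalZFS_of_minimum hS.1 hS.2) (Set.toFinite _))⟩
end

section
/- Let m ≥ 2 and let G = C_5 □ K_m be the Cartesian (box) product of the 5-cycle with the complete graph K_m. Then Z(G) = 2m, and G has at least 2^m distinct minimum zero forcing sets (zero forcing sets of cardinality Z(G)). -/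
namespace ZF

/-- The graph `C₅ □ K_m`. -/
abbrev C5K (m : ℕ) : SimpleGraph (Fin 5 × Fin m) :=
  (SimpleGraph.cycleGraph 5).boxProd (⊤ : SimpleGraph (Fin m))

lemma cycle5_adj (i j : Fin 5) :
    (SimpleGraph.cycleGraph 5).Adj i j ↔ j = i + 1 ∨ j = i + 4 := by
  revert i j
  simp only [SimpleGraph.cycleGraph_adj]
  decide

lemma c5k_adj {m : ℕ} (i i' : Fin 5) (j j' : Fin m) :
    (C5K m).Adj (i, j) (i', j') ↔
      ((i' = i + 1 ∨ i' = i + 4) ∧ j = j') ∨ (j ≠ j' ∧ i = i') := by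
  simp [SimpleGraph.boxProd_adj, cycle5_adj]

/-- A kernel vector of the weighted matrix that vanishes on `S` vanishes on the closure of `S`:
the row of the forcing vertex has a single possibly nonzero term left. -/
lemma eq_zero_of_closure {m : ℕ} {l c : ℝ} (hc : c ≠ 0) {x : Fin 5 × Fin m → ℝ}
    (hx : ∀ i j, x (i + 1, j) + x (i + 4, j) = l * x (i, j) - c * ∑ k, x (i, k))
    {S : Set (Fin 5 × Fin m)} (hS : ∀ v ∈ S, x v = 0) {v : Fin 5 × Fin m}
    (hv : Closure (C5K m) S v) : x v = 0 := by
  induction hv with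
  | init v hv => exact hS v hv
  | force u w _ hadj _ hu hother =>
    obtain ⟨i, j⟩ := u
    obtain ⟨i', k⟩ := w
    have e := hx i j
    have h1 : i ≠ i + 1 := (by decide : ∀ i : Fin 5, i ≠ i + 1) i
    have h4 : i ≠ i + 4 := (by decide : ∀ i : Fin 5, i ≠ i + 4) i
    have h14 : i + 1 ≠ i + 4 := (by decide : ∀ i : Fin 5, i + 1 ≠ i + 4) i
    rw [hu] at e
    rcases (c5k_adj _ _ _ _).1 hadj with ⟨h, rfl⟩ | ⟨h, rfl⟩
    · have hne : i ≠ i' := by rcases h with rfl | rfl <;> assumption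
      have hsum : ∑ k, x (i, k) = 0 := by
        refine Finset.sum_eq_zero fun k _ => ?_
        by_cases hk : j = k
        · rw [← hk, hu]
        · exact hother _ ((c5k_adj _ _ _ _).2 (Or.inr ⟨hk, rfl⟩)) (by simp [hne])
      rw [hsum] at e
      rcases h with rfl | rfl
      · have := hother (i + 4, j) ((c5k_adj _ _ _ _).2 (by simp)) (by simp)
        linarith
      · have := hother (i + 1, j) ((c5k_adj _ _ _ _).2 (by simp)) (by simp)
        linarith
    · have hsum : ∑ k', x (i, k') = x (i, k) := by
        refine Finset.sum_eq_single k (fun k' _ hk' => ?_) (by simp)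
        by_cases hj : j = k'
        · rw [← hj, hu]
        · exact hother _ ((c5k_adj _ _ _ _).2 (Or.inr ⟨hj, rfl⟩)) (by simp [hk'])
      have a1 := hother (i + 1, j) ((c5k_adj _ _ _ _).2 (by simp)) (by simp [h1.symm])
      have a4 := hother (i + 4, j) ((c5k_adj _ _ _ _).2 (by simp)) (by simp [h4.symm])
      rw [hsum, a1, a4] at e
      have : c * x (i, k) = 0 := by linarith
      exact (mul_eq_zero.1 this).resolve_left hc

/-- The kernel vector with prescribed values `p.1` on layer `0` and `p.2` on layer `1`. -/
def kerMap (m : ℕ) (l c : ℝ) :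
    ((Fin m → ℝ) × (Fin m → ℝ)) →ₗ[ℝ] (Fin 5 × Fin m → ℝ) where
  toFun p v :=
    ![p.1 v.2, p.2 v.2, l * p.2 v.2 - p.1 v.2 - c * ∑ k, p.2 k,
      c * (∑ k, p.1 k + ∑ k, p.2 k) - l * (p.1 v.2 + p.2 v.2),
      l * p.1 v.2 - p.2 v.2 - c * ∑ k, p.1 k] v.1
  map_add' p q := by
    ext ⟨i, j⟩
    fin_cases i <;> simp [Finset.sum_add_distrib] <;> ring
  map_smul' r p := by
    ext ⟨i, j⟩
    fin_cases i <;> simp [← Finset.mul_sum] <;> ring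

lemma kerMap_eq {m : ℕ} {l c : ℝ} (hl : l ^ 2 + l = 1) (hc : m * c = 2 * l + 1)
    (p : (Fin m → ℝ) × (Fin m → ℝ)) (i : Fin 5) (j : Fin m) :
    kerMap m l c p (i + 1, j) + kerMap m l c p (i + 4, j) =
      l * kerMap m l c p (i, j) - c * ∑ k, kerMap m l c p (i, k) := by
  obtain ⟨a, b⟩ := p
  fin_cases i <;>
    simp [kerMap, Finset.sum_add_distrib, Finset.sum_sub_distrib, ← Finset.mul_sum]
  · ring
  · ring
  · linear_combination -b j * hl - c * (∑ x, b x) * hc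
  · linear_combination (a j + b j) * hl + c * (∑ x, a x + ∑ x, b x) * hc
  · linear_combination -a j * hl - c * (∑ x, a x) * hc

/-- The maximum nullity bound, for the kernel parametrized by `kerMap`. -/
lemma two_mul_le_ncard {m : ℕ} (hm : 2 ≤ m) {S : Set (Fin 5 × Fin m)}
    (hS : IsZFS (C5K m) S) : 2 * m ≤ S.ncard := by
  obtain ⟨l, hl, hl0⟩ : ∃ l : ℝ, l ^ 2 + l = 1 ∧ 0 < 2 * l + 1 := by
    have h5 : Real.sqrt 5 ^ 2 = 5 := Real.sq_sqrt (by norm_num)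
    refine ⟨(Real.sqrt 5 - 1) / 2, by linear_combination h5 / 4, ?_⟩
    have : 0 < Real.sqrt 5 := by positivity
    linarith
  have hm0 : (0 : ℝ) < m := by exact_mod_cast (by lia : 0 < m)
  obtain ⟨c, hc, hc0⟩ : ∃ c : ℝ, m * c = 2 * l + 1 ∧ c ≠ 0 :=
    ⟨(2 * l + 1) / m, by field_simp, by positivity⟩
  by_contra! hlt
  let L : ((Fin m → ℝ) × (Fin m → ℝ)) →ₗ[ℝ] (S → ℝ) :=
    (LinearMap.funLeft ℝ ℝ ((↑) : S → Fin 5 × Fin m)).comp (kerMap m l c)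
  have hker : LinearMap.ker L ≠ ⊥ := by
    classical
    apply LinearMap.ker_ne_bot_of_finrank_lt
    have : Fintype S := Fintype.ofFinite S
    rw [Module.finrank_fintype_fun_eq_card, Module.finrank_prod,
      Module.finrank_fintype_fun_eq_card, Fintype.card_fin, ← Nat.card_eq_fintype_card,
      Nat.card_coe_set_eq]
    lia
  obtain ⟨p, hp, hp0⟩ := (Submodule.ne_bot_iff _).1 hker
  have hz : ∀ v, kerMap m l c p v = 0 := fun v =>
    eq_zero_of_closure hc0 (kerMap_eq hl hc p)
      (fun v hv => congrFun (LinearMap.mem_ker.1 hp) ⟨v, hv⟩) (hS v)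
  apply hp0
  ext j
  · simpa [kerMap] using hz (0, j)
  · simpa [kerMap] using hz (1, j)

/-- Layer `0` together with `(1, j)` for `j ∈ T` and `(4, j)` for `j ∉ T`. -/
def layerSet {m : ℕ} (T : Finset (Fin m)) : Set (Fin 5 × Fin m) :=
  {v | v.1 = 0 ∨ (v.1 = 1 ∧ v.2 ∈ T) ∨ (v.1 = 4 ∧ v.2 ∉ T)}

lemma layerSet_injective {m : ℕ} : Function.Injective (layerSet (m := m)) := by
  intro T T' h
  ext j
  have := Set.ext_iff.1 h (1, j)
  simpa [layerSet] using this

lemma ncard_layerSet {m : ℕ} (T : Finset (Fin m)) : (layerSet T).ncard = 2 * m := by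
  have hinj : Function.Injective
      (fun q : Bool × Fin m => ((if q.1 then 0 else if q.2 ∈ T then 1 else 4 : Fin 5), q.2)) := by
    rintro ⟨a, j⟩ ⟨b, k⟩ h
    obtain ⟨h1, rfl⟩ := Prod.mk.inj h
    by_cases hj : j ∈ T <;> cases a <;> cases b <;> simp_all
  have hr : layerSet T = Set.range
      (fun q : Bool × Fin m => ((if q.1 then 0 else if q.2 ∈ T then 1 else 4 : Fin 5), q.2)) := by
    ext ⟨i, j⟩
    by_cases hj : j ∈ T <;> simp [layerSet] <;> grind
  rw [hr, ← Nat.card_coe_set_eq, Nat.card_range_of_injective hinj]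
  simp

lemma isZFS_layerSet {m : ℕ} (T : Finset (Fin m)) : IsZFS (C5K m) (layerSet T) := by
  have h0 : ∀ j, Closure (C5K m) (layerSet T) (0, j) := fun j => .init _ (by simp [layerSet])
  -- A vertex of a blue layer with one blue cycle neighbor forces the other cycle neighbor.
  have step : ∀ i i' i'' : Fin 5, (i' = i + 1 ∧ i'' = i + 4 ∨ i' = i + 4 ∧ i'' = i + 1) →
      (∀ j, Closure (C5K m) (layerSet T) (i, j)) → ∀ j,
      Closure (C5K m) (layerSet T) (i'', j) → Closure (C5K m) (layerSet T) (i', j) := by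
    intro i i' i'' hi hall j hj
    refine .force (i, j) _ (hall j) ((c5k_adj _ _ _ _).2 (by tauto)) ?_
    rintro ⟨a, k⟩ hadj hne
    rcases (c5k_adj _ _ _ _).1 hadj with ⟨h, rfl⟩ | ⟨-, rfl⟩
    · have : a ≠ i' := fun h => hne (by rw [h])
      have : a = i'' := by grind
      rwa [this]
    · exact hall k
  have h1 : ∀ j, Closure (C5K m) (layerSet T) (1, j) := fun j => by
    by_cases hj : j ∈ T
    · exact .init _ (by simp [layerSet, hj])
    · exact step 0 1 4 (by decide) h0 j (.init _ (by simp [layerSet, hj]))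
  have h4 : ∀ j, Closure (C5K m) (layerSet T) (4, j) := fun j =>
    step 0 4 1 (by decide) h0 j (h1 j)
  have h2 : ∀ j, Closure (C5K m) (layerSet T) (2, j) := fun j =>
    step 1 2 0 (by decide) h1 j (h0 j)
  have h3 : ∀ j, Closure (C5K m) (layerSet T) (3, j) := fun j =>
    step 4 3 0 (by decide) h4 j (h0 j)
  rintro ⟨i, j⟩
  fin_cases i
  exacts [h0 j, h1 j, h2 j, h3 j, h4 j]

lemma Z_c5k {m : ℕ} (hm : 2 ≤ m) : Z (C5K m) = 2 * m := by
  have hmem : 2 * m ∈ {k | ∃ S : Set (Fin 5 × Fin m), IsZFS (C5K m) S ∧ S.ncard = k} :=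
    ⟨_, isZFS_layerSet ∅, ncard_layerSet ∅⟩
  refine le_antisymm (Nat.sInf_le hmem) (le_csInf ⟨_, hmem⟩ ?_)
  rintro k ⟨S, hS, rfl⟩
  exact two_mul_le_ncard hm hS

end ZF

/-- For `m ≥ 2`, the Cartesian product `C₅ □ K_m` has zero forcing number `2m`
and at least `2 ^ m` distinct minimum zero forcing sets. -/
theorem stmt7 (m : ℕ) (hm : 2 ≤ m) :
    ZF.Z ((SimpleGraph.cycleGraph 5).boxProd (⊤ : SimpleGraph (Fin m))) = 2 * m ∧
    2 ^ m ≤ {S : Set (Fin 5 × Fin m) |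
      ZF.IsZFS ((SimpleGraph.cycleGraph 5).boxProd (⊤ : SimpleGraph (Fin m))) S ∧
      S.ncard = ZF.Z ((SimpleGraph.cycleGraph 5).boxProd (⊤ : SimpleGraph (Fin m)))}.ncard := by
  have hZ := ZF.Z_c5k hm
  refine ⟨hZ, ?_⟩
  rw [hZ]
  calc 2 ^ m = (Set.range (ZF.layerSet (m := m))).ncard := by
        rw [← Nat.card_coe_set_eq, Nat.card_range_of_injective ZF.layerSet_injective]
        simp
    _ ≤ _ := by
        refine Set.ncard_le_ncard ?_ (Set.toFinite _)
        rintro _ ⟨T, rfl⟩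
        exact ⟨ZF.isZFS_layerSet T, ZF.ncard_layerSet T⟩
end

section
/- Let G be a finite simple graph. Then Z̄(G) = Z(G) if and only if every zero forcing set of G contains a minimum zero forcing set of G (a zero forcing set of cardinality Z(G)). -/
namespace ZF

variable {V : Type*}

theorem exists_minimal_subset [Finite V] (G : SimpleGraph V) (S : Set V) (hS : IsZFS G S) :
    ∃ T ⊆ S, IsMinimalZFS G T := by
  obtain ⟨T, hTS, hT⟩ := (Set.toFinite {T : Set V | IsZFS G T}).exists_le_minimal hS
  exact ⟨T, hTS, hT.prop, fun U hU hUz => hT.not_lt hUz hU⟩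

theorem Z_le_ncard {G : SimpleGraph V} {S : Set V} (hS : IsZFS G S) : Z G ≤ S.ncard :=
  Nat.sInf_le ⟨S, hS, rfl⟩

/-- Finiteness of `V` bounds the set of cardinalities, so its supremum is a genuine maximum. -/
theorem ncard_le_Zbar [Finite V] {G : SimpleGraph V} {S : Set V} (hS : IsMinimalZFS G S) :
    S.ncard ≤ Zbar G := by
  refine le_csSup ⟨Nat.card V, ?_⟩ ⟨S, hS, rfl⟩
  rintro _ ⟨T, -, rfl⟩
  exact Set.ncard_le_card T

end ZF

/-- `Z̄(G) = Z(G)` iff every zero forcing set of `G` contains a minimum zero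
forcing set of `G`. -/
theorem stmt9 {V : Type*} [Fintype V] (G : SimpleGraph V) :
    ZF.Zbar G = ZF.Z G ↔
      ∀ S : Set V, ZF.IsZFS G S →
        ∃ T ⊆ S, ZF.IsZFS G T ∧ T.ncard = ZF.Z G := by
  constructor
  · intro h S hS
    obtain ⟨T, hTS, hT⟩ := ZF.exists_minimal_subset G S hS
    exact ⟨T, hTS, hT.1, le_antisymm (h ▸ ZF.ncard_le_Zbar hT) (ZF.Z_le_ncard hT.1)⟩
  · intro h
    obtain ⟨M, -, hM⟩ := ZF.exists_minimal_subset G Set.univ fun v => .init v trivial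
    refine le_antisymm (csSup_le ⟨_, M, hM, rfl⟩ ?_)
      ((ZF.Z_le_ncard hM.1).trans (ZF.ncard_le_Zbar hM))
    rintro _ ⟨S, hS, rfl⟩
    obtain ⟨T, hTS, hT, hcard⟩ := h S hS.1
    -- Minimality of `S` excludes a proper inclusion `T ⊂ S`.
    have hEq : T = S := by
      by_contra hne
      exact hS.2 T (hTS.ssubset_of_ne hne) hT
    exact (hEq ▸ hcard).le
end

section
/- Let G be a finite simple graph with a universal vertex v (a vertex adjacent to all other vertices of G). If Z̄(G) = Z(G), then Z̄(G − v) = Z(G − v), where G − v is the graph obtained from G by deleting v. -/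
namespace ZF

variable {V : Type*}

/-! ### Minimal zero forcing sets and their sizes -/

theorem Closure.of_subset_closure {G : SimpleGraph V} {S T : Set V}
    (hST : ∀ x ∈ S, Closure G T x) {x : V} (hx : Closure G S x) : Closure G T x := by
  induction hx with
  | init x hx => exact hST x hx
  | force u w _ hadj _ ihu ih => exact .force u w ihu hadj ih

theorem IsMinimalZFS.eq_of_subset {G : SimpleGraph V} {S T : Set V} (hS : IsMinimalZFS G S)
    (hTS : T ⊆ S) (hT : IsZFS G T) : T = S := by
  by_contra hne
  exact hS.2 T (hTS.ssubset_of_ne hne) hT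

theorem isMinimalZFS_of_forall {G : SimpleGraph V} {S : Set V} (hS : IsZFS G S)
    (h : ∀ T ⊆ S, IsZFS G T → S ⊆ T) : IsMinimalZFS G S :=
  ⟨hS, fun T hTS hT => hTS.2 (h T hTS.1 hT)⟩

theorem IsMinimalZFS.ncard_eq [Fintype V] {G : SimpleGraph V} (h : Zbar G = Z G) {S : Set V}
    (hS : IsMinimalZFS G S) : S.ncard = Z G := by
  apply le_antisymm
  · rw [← h]
    refine le_csSup ⟨Nat.card V, ?_⟩ ⟨S, hS, rfl⟩
    rintro k ⟨T, -, rfl⟩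
    exact Set.ncard_le_card T
  · exact Nat.sInf_le ⟨S, hS.1, rfl⟩

theorem Zbar_eq_Z_of_const [Finite V] {G : SimpleGraph V} (c : ℕ)
    (h : ∀ S, IsMinimalZFS G S → S.ncard = c) : Zbar G = Z G := by
  obtain ⟨S, hS, hSZ⟩ : Z G ∈ {k | ∃ S : Set V, IsZFS G S ∧ S.ncard = k} :=
    Nat.sInf_mem ⟨_, Set.univ, fun x => .init x trivial, rfl⟩
  -- A zero forcing set of minimum size is minimal, so `c` is attained and equals `Z G`.
  have hmin : IsMinimalZFS G S := by
    refine ⟨hS, fun T hTS hT => ?_⟩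
    have h1 : T.ncard < S.ncard := Set.ncard_lt_ncard hTS (Set.toFinite S)
    have h2 : Z G ≤ T.ncard := Nat.sInf_le ⟨T, hT, rfl⟩
    omega
  have hset : {k | ∃ S : Set V, IsMinimalZFS G S ∧ S.ncard = k} = {c} := by
    ext k
    constructor
    · rintro ⟨T, hT, rfl⟩
      exact h T hT
    · rintro rfl
      exact ⟨S, hmin, h S hmin⟩
  rw [Zbar, hset, csSup_singleton, ← hSZ, h S hmin]

/-! ### Passing between `G` and `G - v` -/

/-- `w` is an isolated vertex of `G - v`. -/
def IsolatedIn (G : SimpleGraph V) (v w : V) : Prop :=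
  w ≠ v ∧ ∀ x, x ≠ v → ¬ G.Adj w x

section

variable {G : SimpleGraph V} {v : V}

/-- Zero forcing sets of `G` that contain every isolated vertex of `G - v` restrict to zero forcing
sets of `G - v`. -/
theorem induce_isZFS (hv : ∀ u, u ≠ v → G.Adj v u)
    {T : Set V} (hT : IsZFS G T) (hI : ∀ w, IsolatedIn G v w → w ∈ T) :
    IsZFS (G.induce {u | u ≠ v}) (Subtype.val ⁻¹' T) := by
  have key : ∀ x, Closure G T x → ∀ hx : x ≠ v,
      Closure (G.induce {u | u ≠ v}) (Subtype.val ⁻¹' T) ⟨x, hx⟩ := by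
    intro x h
    induction h with
    | init x hxT => exact fun hx => .init _ hxT
    | force u w _ hadj _ ihu ih =>
      intro hw
      by_cases huv : u = v
      · subst huv
        by_cases hiso : IsolatedIn G u w
        · exact .init _ (hI w hiso)
        · -- All vertices but `w` are already blue in `G - v` when `v` forces `w`.
          have hall : ∀ x, (hx : x ≠ u) → x ≠ w →
              Closure (G.induce {y | y ≠ u}) (Subtype.val ⁻¹' T) ⟨x, hx⟩ :=
            fun x hx hxw => ih x (hv x hx) hxw hx
          obtain ⟨y, hyu, hwy⟩ : ∃ y, y ≠ u ∧ G.Adj w y := by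
            by_contra! hcon
            exact hiso ⟨hw, hcon⟩
          have hadj' : (G.induce {z | z ≠ u}).Adj ⟨y, hyu⟩ ⟨w, hw⟩ := hwy.symm
          refine .force _ _ (hall y hyu hwy.ne') hadj' ?_
          exact fun x _ hxw => hall x.1 x.2 fun e => hxw (Subtype.ext e)
      · exact .force ⟨u, huv⟩ ⟨w, hw⟩ (ihu huv) hadj
          fun x hux hxw => ih x.1 hux (fun e => hxw (Subtype.ext e)) x.2
  exact fun x => key x.1 (hT x.1) x.2

/-- A zero forcing set of `G - v` still forces `G` after an isolated vertex `w` is left out,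
provided that `v` gets blue. For `w = v` nothing is left out. -/
theorem isZFS_of_induce (hv : ∀ u, u ≠ v → G.Adj v u)
    {B : Set {u | u ≠ v}} {T : Set V} {w : V}
    (hB : IsZFS (G.induce {u | u ≠ v}) B) (hvT : Closure G T v)
    (hw : w ≠ v → IsolatedIn G v w) (hBT : ∀ x ∈ B, x.1 ≠ w → x.1 ∈ T) : IsZFS G T := by
  have key : ∀ x, Closure (G.induce {u | u ≠ v}) B x → x.1 ≠ w → Closure G T x.1 := by
    intro x h
    induction h with
    | init x hx => exact fun hxw => .init _ (hBT x hx hxw)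
    | force a b _ hadj _ iha ih =>
      intro _
      have hab : G.Adj a.1 b.1 := hadj
      -- A vertex with a neighbor in `G - v` is not `w`, and neither are its neighbors.
      have haw : ∀ y, y ≠ v → G.Adj a.1 y → a.1 ≠ w ∧ y ≠ w := fun y hy hay =>
        ⟨fun e => (hw (e ▸ a.2)).2 y hy (e ▸ hay),
          fun e => (hw (e ▸ hy)).2 a.1 a.2 (e ▸ hay.symm)⟩
      refine .force a.1 b.1 (iha (haw b.1 b.2 hab).1) hab fun y hay hyb => ?_
      by_cases hyv : y = v
      · exact hyv ▸ hvT
      · exact ih ⟨y, hyv⟩ hay (fun e => hyb (congrArg Subtype.val e)) (haw y hyv hay).2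
  have hne : ∀ x, x ≠ w → Closure G T x := by
    intro x hxw
    by_cases hxv : x = v
    · exact hxv ▸ hvT
    · exact key ⟨x, hxv⟩ (hB _) hxw
  intro x
  by_cases hxw : x = w
  · by_cases hxv : x = v
    · exact hxv ▸ hvT
    · exact .force v x hvT (hv x hxv) fun y _ hyx => hne y (hxw ▸ hyx)
  · exact hne x hxw

/-! ### Constraints on zero forcing sets of `G` and of `G - v` -/

/-- As long as the universal vertex `v` is white, it is the only vertex that can be forced. -/
theorem exists_closed_nbhd (hv : ∀ u, u ≠ v → G.Adj v u)
    {T : Set V} (hT : IsZFS G T) (hvT : v ∉ T) :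
    ∃ u ∈ T, ∀ x, x ≠ v → G.Adj u x → x ∈ T := by
  by_contra! hcon
  have key : ∀ x, Closure G T x → x ∈ T := by
    intro x h
    induction h with
    | init x hx => exact hx
    | force u w _ hadj _ ihu ih =>
      by_cases hwv : w = v
      · obtain ⟨x, hxv, hux, hxT⟩ := hcon u ihu
        exact absurd (ih x hux (hwv ▸ hxv)) hxT
      · have huv : u ≠ v := fun e => hvT (e ▸ ihu)
        exact absurd (ih v (hv u huv).symm (Ne.symm hwv)) hvT
  exact hvT (key v (hT v))

/-- Two isolated vertices of `G - v` have `v` as their only neighbor, which cannot force either of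
them while both are white. -/
theorem mem_or_mem_of_isolated (hv : ∀ u, u ≠ v → G.Adj v u)
    {T : Set V} (hT : IsZFS G T) {a b : V} (ha : IsolatedIn G v a)
    (hb : IsolatedIn G v b) (hab : a ≠ b) : a ∈ T ∨ b ∈ T := by
  by_contra! hcon
  have key : ∀ x, Closure G T x → x ≠ a ∧ x ≠ b := by
    intro x h
    induction h with
    | init x hx => exact ⟨fun e => hcon.1 (e ▸ hx), fun e => hcon.2 (e ▸ hx)⟩
    | force u w _ hadj _ _ ih =>
      refine ⟨?_, ?_⟩
      · rintro rfl
        have huv : u = v := by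
          by_contra huv
          exact ha.2 u huv hadj.symm
        exact (ih b (huv ▸ hv b hb.1) hab.symm).2 rfl
      · rintro rfl
        have huv : u = v := by
          by_contra huv
          exact hb.2 u huv hadj.symm
        exact (ih a (huv ▸ hv a ha.1) hab).1 rfl
  exact (key a (hT a)).1 rfl

/-- If `B` contained `u` and all neighbors of `u`, one of these neighbors could be dropped from `B`,
since `u` forces it at once. -/
theorem isolated_of_nbhd {B : Set {u | u ≠ v}}
    (hB : IsMinimalZFS (G.induce {u | u ≠ v}) B) {u : V} (hu : u ∈ Subtype.val '' B)
    (hN : ∀ x, x ≠ v → G.Adj u x → x ∈ Subtype.val '' B) : IsolatedIn G v u := by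
  obtain ⟨u, huB, rfl⟩ := hu
  refine ⟨u.2, fun y hyv huy => ?_⟩
  have hmem : ∀ x : {u | u ≠ v}, G.Adj u.1 x.1 → x ∈ B := fun x hx =>
    Subtype.val_injective.mem_set_image.1 (hN x.1 x.2 hx)
  have huy' : (G.induce {u | u ≠ v}).Adj u ⟨y, hyv⟩ := huy
  refine hB.2 (B \ {⟨y, hyv⟩}) (Set.sdiff_singleton_ssubset.2 (hmem ⟨y, hyv⟩ huy)) fun x =>
    Closure.of_subset_closure (fun z hz => ?_) (hB.1 x)
  by_cases hzy : z = ⟨y, hyv⟩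
  · subst hzy
    exact .force u _ (.init _ ⟨huB, huy'.ne⟩) huy' fun x hux hxy => .init _ ⟨hmem x hux, hxy⟩
  · exact .init _ ⟨hz, hzy⟩

theorem isolated_mem {S : Set {u | u ≠ v}} (hS : IsZFS (G.induce {u | u ≠ v}) S) {w : V}
    (hw : IsolatedIn G v w) : w ∈ Subtype.val '' S := by
  refine ⟨⟨w, hw.1⟩, ?_, rfl⟩
  cases hS ⟨w, hw.1⟩ with
  | init _ h => exact h
  | force a _ _ hadj _ => exact absurd (SimpleGraph.Adj.symm hadj) (hw.2 a.1 a.2)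

/-! ### Minimal zero forcing sets of `G` from those of `G - v` -/

/-- The tool for the minimality of the zero forcing sets built from `B`: if a zero forcing set `T`
of `G` inside `B ∪ {v}` contains all isolated vertices of `G - v` up to a set `J ⊆ B`, then `T ∪ J`
contains `B`. -/
theorem image_subset_union (hv : ∀ u, u ≠ v → G.Adj v u)
    {B : Set {u | u ≠ v}}
    (hB : IsMinimalZFS (G.induce {u | u ≠ v}) B) {T J : Set V} (hT : IsZFS G T)
    (hTB : T ⊆ insert v (Subtype.val '' B)) (hJ : J ⊆ Subtype.val '' B)
    (hI : ∀ w, IsolatedIn G v w → w ∈ T ∪ J) : Subtype.val '' B ⊆ T ∪ J := by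
  have hTJ : IsZFS G (T ∪ J) := fun x =>
    Closure.of_subset_closure (fun z hz => .init z (Or.inl hz)) (hT x)
  have heq := hB.eq_of_subset (T := Subtype.val ⁻¹' (T ∪ J)) ?_ (induce_isZFS hv hTJ hI)
  · rw [← heq]
    exact Set.image_preimage_subset _ _
  · rintro x (hx | hx)
    · rcases hTB hx with e | hx
      · exact absurd e x.2
      · exact Subtype.val_injective.mem_set_image.1 hx
    · exact Subtype.val_injective.mem_set_image.1 (hJ hx)

theorem minimal_of_no_isolated (hv : ∀ u, u ≠ v → G.Adj v u)
    (hno : ∀ w, ¬ IsolatedIn G v w) {B : Set {u | u ≠ v}}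
    (hB : IsMinimalZFS (G.induce {u | u ≠ v}) B) :
    IsMinimalZFS G (insert v (Subtype.val '' B)) := by
  refine isMinimalZFS_of_forall (isZFS_of_induce hv (w := v) hB.1
    (.init _ (Set.mem_insert _ _)) (fun h => absurd rfl h)
    (fun x hx _ => Or.inr ⟨x, hx, rfl⟩)) fun T hTS hT => ?_
  have hvT : v ∈ T := by
    by_contra hvT
    have hTB : T ⊆ Subtype.val '' B := (Set.subset_insert_iff_of_notMem hvT).1 hTS
    obtain ⟨u, huT, hN⟩ := exists_closed_nbhd hv hT hvT
    exact hno u (isolated_of_nbhd hB (hTB huT) fun x hxv hux => hTB (hN x hxv hux))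
  have := image_subset_union hv hB (J := ∅) hT hTS (Set.empty_subset _)
    fun w hw => absurd hw (hno w)
  rw [Set.union_empty] at this
  exact Set.insert_subset hvT this

theorem minimal_of_unique_isolated (hv : ∀ u, u ≠ v → G.Adj v u)
    {w : V} (hw : IsolatedIn G v w)
    (huniq : ∀ u, IsolatedIn G v u → u = w) {B : Set {u | u ≠ v}}
    (hB : IsMinimalZFS (G.induce {u | u ≠ v}) B) : IsMinimalZFS G (Subtype.val '' B) := by
  have hvB : v ∉ Subtype.val '' B := by
    rintro ⟨x, -, e⟩
    exact x.2 e
  refine isMinimalZFS_of_forall (isZFS_of_induce hv (w := v) hB.1 ?_ (fun h => absurd rfl h)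
    (fun x hx _ => ⟨x, hx, rfl⟩)) fun T hTS hT => ?_
  · exact .force w v (.init _ (isolated_mem hB.1 hw)) (hv w hw.1).symm
      fun x hwx hxv => absurd hwx (hw.2 x hxv)
  · obtain ⟨u, huT, hN⟩ := exists_closed_nbhd hv hT fun h => hvB (hTS h)
    have hu := isolated_of_nbhd hB (hTS huT) fun x hxv hux => hTS (hN x hxv hux)
    have := image_subset_union hv hB (J := ∅) hT (hTS.trans (Set.subset_insert _ _))
      (Set.empty_subset _) fun x hx => Or.inl (by rwa [huniq x hx, ← huniq u hu])
    rwa [Set.union_empty] at this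

theorem minimal_of_two_isolated (hv : ∀ u, u ≠ v → G.Adj v u)
    {w a : V} (hw : IsolatedIn G v w) (ha : IsolatedIn G v a)
    (haw : a ≠ w) {B : Set {u | u ≠ v}} (hB : IsMinimalZFS (G.induce {u | u ≠ v}) B) :
    IsMinimalZFS G (Subtype.val '' B \ {w}) := by
  refine isMinimalZFS_of_forall (isZFS_of_induce hv (w := w) hB.1 ?_ (fun _ => hw)
    (fun x hx hxw => ⟨⟨x, hx, rfl⟩, hxw⟩)) fun T hTS hT => ?_
  · exact .force a v (.init _ ⟨isolated_mem hB.1 ha, haw⟩) (hv a ha.1).symm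
      fun x hax hxv => absurd hax (ha.2 x hxv)
  · have hwT : w ∉ T := fun h => (hTS h).2 rfl
    have hsub := image_subset_union hv hB (J := {w}) hT
      (hTS.trans (Set.sdiff_subset.trans (Set.subset_insert _ _)))
      (Set.singleton_subset_iff.2 (isolated_mem hB.1 hw)) fun x hx => by
        by_cases hxw : x = w
        · exact Or.inr hxw
        · exact Or.inl ((mem_or_mem_of_isolated hv hT hx hw hxw).resolve_right hwT)
    rintro x ⟨hxB, hxw⟩
    exact (hsub hxB).resolve_right hxw

end

end ZF

/-! ### Comparing sizes -/

/-- If `v` is a universal vertex of `G` and `Z̄(G) = Z(G)`, then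
`Z̄(G - v) = Z(G - v)`. -/
theorem stmt14 {V : Type*} [Fintype V] [DecidableEq V] (G : SimpleGraph V) (v : V)
    (hv : ∀ u, u ≠ v → G.Adj v u) (h : ZF.Zbar G = ZF.Z G) :
    ZF.Zbar (G.induce {u | u ≠ v}) = ZF.Z (G.induce {u | u ≠ v}) := by
  have hcard : ∀ B : Set {u | u ≠ v}, (Subtype.val '' B).ncard = B.ncard := fun B =>
    Set.ncard_image_of_injective B Subtype.val_injective
  by_cases hI : ∃ w, ZF.IsolatedIn G v w
  · obtain ⟨w, hw⟩ := hI
    by_cases huniq : ∀ u, ZF.IsolatedIn G v u → u = w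
    · refine ZF.Zbar_eq_Z_of_const (ZF.Z G) fun B hB => ?_
      rw [← (ZF.minimal_of_unique_isolated hv hw huniq hB).ncard_eq h, hcard]
    · push Not at huniq
      obtain ⟨a, ha, haw⟩ := huniq
      refine ZF.Zbar_eq_Z_of_const (ZF.Z G + 1) fun B hB => ?_
      rw [← (ZF.minimal_of_two_isolated hv hw ha haw hB).ncard_eq h,
        Set.ncard_sdiff_singleton_add_one (ZF.isolated_mem hB.1 hw) (Set.toFinite _), hcard]
  · refine ZF.Zbar_eq_Z_of_const (ZF.Z G - 1) fun B hB => ?_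
    have hvB : v ∉ Subtype.val '' B := by
      rintro ⟨x, -, e⟩
      exact x.2 e
    rw [← (ZF.minimal_of_no_isolated hv (not_exists.1 hI) hB).ncard_eq h,
      Set.ncard_insert_of_notMem hvB (Set.toFinite _), hcard, Nat.add_sub_cancel]
end

section
/- Let G = (V,E) be a finite simple graph. A set S ⊆ V is a minimal zero forcing set of G if and only if S is a minimal cover of the collection of forts of G, i.e., S intersects every fort of G and no proper subset of S intersects every fort of G. -/
/-- A fort of `G`: a nonempty vertex set `F` such that no vertex outside `F`
has exactly one neighbor in `F`. -/
def ZF.IsFort {V : Type*} (G : SimpleGraph V) (F : Set V) : Prop :=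
  F.Nonempty ∧ ∀ v ∉ F, ¬ ∃! w, w ∈ F ∧ G.Adj v w

/-- Forcing never enters a fort that is disjoint from the initial blue set. -/
theorem ZF.not_mem_of_closure {V : Type*} {G : SimpleGraph V} {S F : Set V}
    (hF : ZF.IsFort G F) (hSF : Disjoint S F) {v : V} (hv : ZF.Closure G S v) : v ∉ F := by
  induction hv with
  | init v hv => exact Set.disjoint_left.mp hSF hv
  | force u w _ hadj _ ihu ihother =>
    intro hw
    refine hF.2 u ihu ⟨w, ⟨hw, hadj⟩, ?_⟩
    rintro x ⟨hx, hux⟩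
    by_contra hne
    exact ihother x hux hne hx

/-- The vertices that are never colored blue form a fort, as soon as there are any. -/
theorem ZF.isFort_compl_closure {V : Type*} {G : SimpleGraph V} {S : Set V}
    (h : ¬ ZF.IsZFS G S) : ZF.IsFort G {v | ¬ ZF.Closure G S v} := by
  refine ⟨not_forall.mp h, ?_⟩
  rintro v hv ⟨w, ⟨hw, hvw⟩, huniq⟩
  refine hw (.force v w (not_not.mp hv) hvw fun x hvx hne => ?_)
  by_contra hx
  exact hne (huniq x ⟨hx, hvx⟩)

theorem ZF.isZFS_iff_forall_fort {V : Type*} (G : SimpleGraph V) (S : Set V) :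
    ZF.IsZFS G S ↔ ∀ F : Set V, ZF.IsFort G F → (S ∩ F).Nonempty := by
  constructor
  · intro h F hF
    by_contra hne
    obtain ⟨v, hv⟩ := hF.1
    exact ZF.not_mem_of_closure hF
      (Set.disjoint_iff_inter_eq_empty.mpr (Set.not_nonempty_iff_eq_empty.mp hne)) (h v) hv
  · intro h
    by_contra hS
    obtain ⟨v, hvS, hv⟩ := h _ (ZF.isFort_compl_closure hS)
    exact hv (.init v hvS)

/-- `S` is a minimal zero forcing set of `G` iff `S` is a minimal cover of the
collection of forts of `G`: `S` intersects every fort and no proper subset of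
`S` intersects every fort. -/
theorem stmt16 {V : Type*} [Fintype V] (G : SimpleGraph V) (S : Set V) :
    ZF.IsMinimalZFS G S ↔
      ((∀ F : Set V, ZF.IsFort G F → (S ∩ F).Nonempty) ∧
       ∀ T : Set V, T ⊂ S → ¬ (∀ F : Set V, ZF.IsFort G F → (T ∩ F).Nonempty)) := by
  simp only [ZF.IsMinimalZFS, ZF.isZFS_iff_forall_fort]
end

section
/- Let G = (V,E) be a finite simple graph and S ⊆ V a set with cl(S) ≠ V. Then V ∖ cl(S) is a fort of G. -/
/-- If `cl(S) ≠ V`, then `V ∖ cl(S)` is a fort of `G`. -/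
theorem stmt17 {V : Type*} [Fintype V] (G : SimpleGraph V) (S : Set V)
    (h : {v | ZF.Closure G S v} ≠ Set.univ) :
    ZF.IsFort G {v | ZF.Closure G S v}ᶜ := by
  refine ⟨Set.nonempty_compl.2 h, ?_⟩
  rintro v hv ⟨w, ⟨hw, hadj⟩, huniq⟩
  -- A blue `v` whose only white neighbor is `w` forces `w`, so `w` is already in the closure.
  exact hw (.force v w (not_not.1 hv) hadj fun x hx hxw =>
    by_contra fun hxc => hxw (huniq x ⟨hxc, hx⟩))
end

section
/- Let G = (V,E) be a finite simple graph and v ∈ V. Every minimal zero forcing set of G contains v if and only if v is an isolated vertex (a vertex with no neighbors). -/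
/-- Every minimal zero forcing set of `G` contains the vertex `v` iff `v` is
an isolated vertex. -/
theorem stmt18 {V : Type*} [Fintype V] (G : SimpleGraph V) (v : V) :
    (∀ S : Set V, ZF.IsMinimalZFS G S → v ∈ S) ↔ ∀ u, ¬ G.Adj v u := by
  constructor
  · intro h u hvu
    -- The blue neighbor `u` has `v` as its only white neighbor, so it forces `v`.
    have hcompl : ZF.IsZFS G {v}ᶜ := by
      intro w
      by_cases hw : w = v
      · subst hw
        exact .force u w (.init u hvu.ne') hvu.symm fun x _ hx => .init x hx
      · exact .init w hw
    -- Shrink `{v}ᶜ` to a minimal zero forcing set, which then avoids `v`.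
    obtain ⟨S, hS, hmin⟩ :=
      (Set.toFinite {T : Set V | ZF.IsZFS G T}).exists_le_minimal hcompl
    have hvS : v ∈ S := h S ⟨hmin.prop, fun T hT hZ => hT.not_subset (hmin.le_of_le hZ hT.1)⟩
    exact hS hvS rfl
  · intro h S hS
    -- An isolated vertex is never the target of a force, so it is blue only if initially blue.
    cases hS.1 v with
    | init _ hv => exact hv
    | force u _ _ hadj _ => exact absurd hadj.symm (h u)
end
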